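/- Let d ≥ 1, let E = EuclideanSpace ℝ (Fin d), fix θ₀, θ₁ ∈ E, let L : E → ℝ be differentiable, and set ΔL = L(θ₁) - L(θ₀). Let θ : [0,1] → E be continuous, differentiable on [0,1), with θ(0) = θ₀ and θ(1) = θ₁, and for t ∈ [0,1) set g(t) = ∇L(θ(t)), u(t) = (1/(1-t))·(θ₁ - θ(t)); assume g(t) ≠ 0 for all t ∈ [0,1). Define γ(t) = 1 if ⟨g(t), u(t)⟩ ≤ 0 and γ(t) = min(max(ΔL/⟨g(t), u(t)⟩, 0), 1) if ⟨g(t), u(t)⟩ > 0, and assume θ'(t) = (u(t) - P_{g(t)}(u(t))) + γ(t)·P_{g(t)}(u(t)) for all t ∈ [0,1). Then the loss barrier along the path, B = sup over t ∈ [0,1] of L(θ(t)) - ((1-t)·L(θ₀) + t·L(θ₁)), satisfies B ≤ max(L(θ₀) - L(θ₁), 0). -/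

import Mathlib

/-!
Since `u - P_g u` is orthogonal to `g` and `⟪g, P_g u⟫ = ⟪g, u⟫`, the chain rule gives
`(L ∘ θ)' = γ ⟪g, u⟫` along the path, and the clipping in the definition of `γ` makes this at most
`max ΔL 0` (`gain_mul_le`). Comparison with the affine function `t ↦ L θ₀ + t * max ΔL 0` bounds
`L (θ t)` on `[0, 1]`; subtracting the linear interpolation leaves
`t * (max ΔL 0 - ΔL) = t * max (-ΔL) 0 ≤ max (-ΔL) 0`.
-/

open Set
open scoped RealInnerProductSpace

/-- Orthogonal projection of `u` onto the line spanned by `g`: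
`P_g(u) = (⟪u, g⟫ / ‖g‖²) • g`. -/
noncomputable def projLine {d : ℕ} (g u : EuclideanSpace ℝ (Fin d)) :
    EuclideanSpace ℝ (Fin d) :=
  (⟪u, g⟫ / ‖g‖ ^ 2) • g

lemma inner_projLine {d : ℕ} {g : EuclideanSpace ℝ (Fin d)} (hg : g ≠ 0)
    (u : EuclideanSpace ℝ (Fin d)) : ⟪g, projLine g u⟫ = ⟪g, u⟫ := by
  have h : ‖g‖ ≠ 0 := norm_ne_zero_iff.mpr hg
  rw [projLine, inner_smul_right, real_inner_self_eq_norm_sq, real_inner_comm]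
  field_simp

/-- The clipped gain keeps the rate of change of the loss at most `max Δ 0`; here `s` plays the
role of `⟪g, u⟫`. -/
lemma gain_mul_le (Δ s : ℝ) :
    (if s ≤ 0 then 1 else min (max (Δ / s) 0) 1) * s ≤ max Δ 0 := by
  split_ifs with h
  · rw [one_mul]
    exact h.trans (le_max_right _ _)
  · push Not at h
    calc min (max (Δ / s) 0) 1 * s ≤ max (Δ / s) 0 * s := by gcongr; exact min_le_left _ _
      _ = max Δ 0 := by
        rw [max_mul_of_nonneg _ _ h.le, div_mul_cancel₀ _ h.ne', zero_mul]

theorem stmt10 {d : ℕ} (hd : 1 ≤ d)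
    (θ₀ θ₁ : EuclideanSpace ℝ (Fin d))
    (L : EuclideanSpace ℝ (Fin d) → ℝ) (hL : Differentiable ℝ L)
    (θ : ℝ → EuclideanSpace ℝ (Fin d))
    (hθcont : ContinuousOn θ (Icc (0:ℝ) 1))
    (hθ0 : θ 0 = θ₀) (hθ1 : θ 1 = θ₁)
    (g u : ℝ → EuclideanSpace ℝ (Fin d))
    (hg : ∀ t ∈ Ico (0:ℝ) 1, g t = gradient L (θ t))
    (hu : ∀ t ∈ Ico (0:ℝ) 1, u t = (1 / (1 - t)) • (θ₁ - θ t))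
    (hgne : ∀ t ∈ Ico (0:ℝ) 1, g t ≠ 0)
    (γ : ℝ → ℝ)
    (hγ : ∀ t ∈ Ico (0:ℝ) 1,
      γ t = if ⟪g t, u t⟫ ≤ 0 then 1
            else min (max ((L θ₁ - L θ₀) / ⟪g t, u t⟫) 0) 1)
    (hode : ∀ t ∈ Ico (0:ℝ) 1,
      HasDerivWithinAt θ
        ((u t - projLine (g t) (u t)) + γ t • projLine (g t) (u t))
        (Ico (0:ℝ) 1) t) :
    (⨆ t : Icc (0:ℝ) 1, (L (θ t) - ((1 - (t:ℝ)) * L θ₀ + (t:ℝ) * L θ₁)))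
      ≤ max (L θ₀ - L θ₁) 0 := by
  subst hθ0 hθ1
  set M := max (L (θ 1) - L (θ 0)) 0 with hM
  have hderiv : ∀ t ∈ Ico (0:ℝ) 1,
      HasDerivWithinAt (fun t => L (θ t)) (γ t * ⟪g t, u t⟫) (Ici t) t := by
    intro t ht
    have hθ := (hode t ht).mono_of_mem_nhdsWithin (s := Ici t)
      (Filter.mem_of_superset (Ico_mem_nhdsGE ht.2) (Ico_subset_Ico_left ht.1))
    have hgrad : HasGradientAt L (g t) (θ t) := by
      rw [hg t ht]
      exact (hL (θ t)).hasGradientAt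
    have h := hgrad.hasFDerivAt.comp_hasDerivWithinAt t hθ
    have hval : InnerProductSpace.toDual ℝ _ (g t)
        ((u t - projLine (g t) (u t)) + γ t • projLine (g t) (u t)) = γ t * ⟪g t, u t⟫ := by
      rw [InnerProductSpace.toDual_apply_apply, inner_add_right, inner_sub_right,
        inner_smul_right, inner_projLine (hgne t ht)]
      ring
    rwa [hval] at h
  have hbound : ∀ ⦃t⦄, t ∈ Icc (0:ℝ) 1 → L (θ t) ≤ L (θ 0) + M * t := by
    refine image_le_of_deriv_right_le_deriv_boundary (f := fun t => L (θ t))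
      (B := fun t => L (θ 0) + M * t) (B' := fun _ => M)
      (hL.continuous.comp_continuousOn hθcont) hderiv (by simp) (by fun_prop) ?_ ?_
    · intro t _
      simpa using (((hasDerivAt_id t).const_mul M).const_add (L (θ 0))).hasDerivWithinAt
    · intro t ht
      rw [hγ t ht]
      exact gain_mul_le _ _
  have : Nonempty (Icc (0:ℝ) 1) := ⟨⟨0, by simp⟩⟩
  refine ciSup_le ?_
  rintro ⟨t, ht⟩
  have h := hbound ht
  have hM' : max (L (θ 0) - L (θ 1)) 0 = M - (L (θ 1) - L (θ 0)) := by
    rw [hM, ← max_sub_sub_right, max_comm]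
    simp
  have hnonneg : 0 ≤ M - (L (θ 1) - L (θ 0)) := sub_nonneg.mpr (le_max_left _ _)
  rw [hM']
  dsimp only
  nlinarith [mul_nonneg hnonneg (sub_nonneg.mpr ht.2)]
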